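/- Under these hypotheses: (i) η is ∇̸-horizontal, i.e. v(η(v₁,v₂)) = η(∇̸_v v₁, v₂) + η(v₁, ∇̸_v v₂) for all v, v₁, v₂ ∈ D; (ii) the multiplication is self-adjoint with respect to η, i.e. η(v*v₁, v₂) = η(v₁, v*v₂) for all v, v₁, v₂ ∈ D; (iii) if in addition there are E ∈ D and a map N : D → D with ∇_{z∂z}(∇_vζ) = −z⁻¹·∇_{E*v}ζ + ∇_{N(v)}ζ for all v ∈ D, then η(N(v₁), v₂) + η(v₁, N(v₂)) = (n−2)·η(v₁, v₂) for all v₁, v₂ ∈ D. -/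

import Mathlib

noncomputable section

variable {A : Type*} [CommRing A] [Algebra ℂ A]

/-- The coefficientwise action of a derivation `v` of `A` on the Laurent series ring
`A((z))`. -/
def derivAct (v : Derivation ℂ A A) (P : LaurentSeries A) : LaurentSeries A where
  coeff n := v (P.coeff n)
  isPWO_support' := P.isPWO_support.mono (by
    intro n hn
    rw [Function.mem_support] at hn
    rw [HahnSeries.mem_support]
    intro h
    rw [h, map_zero] at hn
    exact hn rfl)

/-- The derivation `z∂z = z·d/dz` acting coefficientwise on `A((z))`: `zⁿ ↦ n·zⁿ`. -/
def zDz (P : LaurentSeries A) : LaurentSeries A where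
  coeff n := (n : ℤ) • P.coeff n
  isPWO_support' := P.isPWO_support.mono (by
    intro n hn
    rw [Function.mem_support] at hn
    rw [HahnSeries.mem_support]
    intro h
    rw [h, smul_zero] at hn
    exact hn rfl)

/-- The involution `σ : A((z)) → A((z))`, `P(z) ↦ P(−z)`. -/
def sigmaInv (P : LaurentSeries A) : LaurentSeries A where
  coeff n := ((((-1 : ℤˣ) ^ n : ℤˣ) : ℤ)) • P.coeff n
  isPWO_support' := P.isPWO_support.mono (by
    intro n hn
    rw [Function.mem_support] at hn
    rw [HahnSeries.mem_support]
    intro h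
    rw [h, smul_zero] at hn
    exact hn rfl)

/-! Pair two first derivatives of `ζ` and differentiate. Since `σ(z⁻¹) = -z⁻¹`, the two polar terms
of the Leibniz rule enter degree `n - 3` with opposite signs and the two regular terms enter degree
`n - 2` with equal signs, while the derivative of `η(v₁, v₂) zⁿ⁻²` lives in degree `n - 2` only.
Degree `n - 3` is therefore self-adjointness of the multiplication, and degree `n - 2` is the
derivation property of `η`, for `∇_v` and `∇_{z∂z}` alike. -/

section Pairing

open HahnSeries (single)

theorem single_eq_single_add_single_iff {Γ R : Type*} [PartialOrder Γ] [AddMonoid R] {i j : Γ}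
    (hij : i ≠ j) {x y w : R} :
    single j x = single i y + single j w ↔ y = 0 ∧ x = w := by
  refine ⟨fun h ↦ ⟨?_, ?_⟩, ?_⟩
  · simpa [HahnSeries.coeff_single_of_ne hij] using (congrArg (HahnSeries.coeff · i) h).symm
  · simpa [HahnSeries.coeff_single_of_ne hij.symm] using congrArg (HahnSeries.coeff · j) h
  · rintro ⟨rfl, rfl⟩
    simp

variable {R M D : Type*} [Ring R] [AddCommGroup M] [Module (LaurentSeries R) M]

/-- A biadditive pairing with values in `R((z))` that is sesquilinear for `z ↦ -z`. Only the
instance `z⁻¹` of `K(P m, Q m') = P(z) Q(-z) K(m, m')` is recorded, so that the involution on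
`R((z))` need not be named. -/
structure IsZSesquilinear (K : M →+ M →+ LaurentSeries R) : Prop where
  zInv_smul_left (m m' : M) :
    K ((single (-1 : ℤ) (1 : R) : LaurentSeries R) • m) m' = single (-1) 1 * K m m'
  zInv_smul_right (m m' : M) :
    K m ((single (-1 : ℤ) (1 : R) : LaurentSeries R) • m') = -(single (-1) 1 * K m m')

/-- The operator `T` on `M` satisfies the Leibniz rule for the pairing `K` over the operator `δ` on
scalars; for a covariant derivative `T` this says that `K` is parallel. -/
def IsLeibniz (K : M →+ M →+ LaurentSeries R) (δ : LaurentSeries R → LaurentSeries R)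
    (T : M → M) : Prop :=
  ∀ m m', δ (K m m') = K (T m) m' + K m (T m')

namespace IsZSesquilinear

variable {K : M →+ M →+ LaurentSeries R} {d : ℤ} {s : D → M} {η : D → D → R}

theorem leibniz_expansion (hK : IsZSesquilinear K)
    (hpure : ∀ v w, K (s v) (s w) = single d (η v w))
    {T : M → M} {a b : D → D} {ε : ℤ}
    (hT : ∀ v, T (s v)
      = ε • (single (-1 : ℤ) (1 : R) : LaurentSeries R) • s (a v) + s (b v)) (v w : D) :
    K (T (s v)) (s w) + K (s v) (T (s w))
      = single (d - 1) (ε • (η (a v) w - η v (a w))) + single d (η (b v) w + η v (b w)) := by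
  have zInv_mul (x : R) : single (-1 : ℤ) (1 : R) * single d x = single (d - 1) x := by
    rw [HahnSeries.single_mul_single, one_mul, neg_add_eq_sub]
  have single_zsmul (x : R) : single (d - 1) (ε • x) = ε • single (d - 1) x :=
    map_zsmul (HahnSeries.single.addMonoidHom (d - 1)) ε x
  have left : K (T (s v)) (s w) = ε • single (d - 1) (η (a v) w) + single d (η (b v) w) := by
    rw [hT, map_add, map_zsmul, AddMonoidHom.add_apply, AddMonoidHom.zsmul_apply,
      hK.zInv_smul_left, hpure, hpure, zInv_mul]
  have right : K (s v) (T (s w)) = -(ε • single (d - 1) (η v (a w))) + single d (η v (b w)) := by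
    rw [hT, map_add, map_zsmul, hK.zInv_smul_right, hpure, hpure, zInv_mul, smul_neg]
  rw [left, right, single_zsmul, HahnSeries.single_sub, HahnSeries.single_add, smul_sub]
  abel

theorem adjoint_and_derivation (hK : IsZSesquilinear K)
    (hpure : ∀ v w, K (s v) (s w) = single d (η v w))
    {δ : LaurentSeries R → LaurentSeries R} {δ₀ : R → R}
    (hδ : ∀ x, δ (single d x) = single d (δ₀ x)) {T : M → M} (hKT : IsLeibniz K δ T)
    {a b : D → D} {ε : ℤ}
    (hT : ∀ v, T (s v)
      = ε • (single (-1 : ℤ) (1 : R) : LaurentSeries R) • s (a v) + s (b v)) (v w : D) :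
    ε • (η (a v) w - η v (a w)) = 0 ∧ δ₀ (η v w) = η (b v) w + η v (b w) := by
  rw [← single_eq_single_add_single_iff (sub_one_lt d).ne, ← hδ, ← hpure, hKT,
    hK.leibniz_expansion hpure hT]

end IsZSesquilinear

/-- `s v` stands for `∇_v ζ`, `d` for `n - 2`, `a v` for `E * v`, and `δ v`, `θ` for the actions of
`v` and `z∂z` on Laurent series. -/
theorem metric_flat_structure_general {K : M →+ M →+ LaurentSeries R} (hK : IsZSesquilinear K)
    {d : ℤ} {s : D → M} {η : D → D → R} (hpure : ∀ v w, K (s v) (s w) = single d (η v w))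
    {act : D → R → R} {δ : D → LaurentSeries R → LaurentSeries R}
    (hδ : ∀ v x, δ v (single d x) = single d (act v x))
    {nablaV : D → M → M} (hKV : ∀ v, IsLeibniz K (δ v) (nablaV v))
    {mul nablaS : D → D → D}
    (hflat : ∀ v w, nablaV v (s w)
      = (single (-1 : ℤ) (1 : R) : LaurentSeries R) • s (mul v w) + s (nablaS v w))
    {θ : LaurentSeries R → LaurentSeries R} (hθ : ∀ x, θ (single d x) = single d (d • x))
    {nablaZ : M → M} (hKZ : IsLeibniz K θ nablaZ) :
    (∀ v v₁ v₂, act v (η v₁ v₂) = η (nablaS v v₁) v₂ + η v₁ (nablaS v v₂)) ∧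
    (∀ v v₁ v₂, η (mul v v₁) v₂ = η v₁ (mul v v₂)) ∧
    (∀ a N : D → D,
      (∀ v, nablaZ (s v)
        = -((single (-1 : ℤ) (1 : R) : LaurentSeries R) • s (a v)) + s (N v)) →
      ∀ v₁ v₂, η (N v₁) v₂ + η v₁ (N v₂) = d • η v₁ v₂) := by
  have hV (v : D) := hK.adjoint_and_derivation hpure (hδ v) (hKV v) (a := mul v)
    (b := nablaS v) (ε := 1) (by simpa only [one_smul] using hflat v)
  refine ⟨fun v v₁ v₂ ↦ (hV v v₁ v₂).2, fun v v₁ v₂ ↦ ?_, fun a N hN v₁ v₂ ↦ ?_⟩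
  · simpa only [one_smul, sub_eq_zero] using (hV v v₁ v₂).1
  · exact (hK.adjoint_and_derivation hpure hθ hKZ (a := a) (ε := -1)
      (by simpa only [neg_smul, one_smul] using hN) v₁ v₂).2.symm

end Pairing

theorem derivAct_single (v : Derivation ℂ A A) (k : ℤ) (x : A) :
    derivAct v (HahnSeries.single k x) = HahnSeries.single k (v x) := by
  ext j
  change v ((HahnSeries.single k x).coeff j) = _
  rw [HahnSeries.coeff_single, HahnSeries.coeff_single, apply_ite v, map_zero]

theorem zDz_single {R : Type*} [CommRing R] (k : ℤ) (x : R) :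
    zDz (HahnSeries.single k x) = HahnSeries.single k (k • x) := by
  ext j
  change j • (HahnSeries.single k x).coeff j = _
  by_cases h : j = k <;> simp [h]

theorem sigmaInv_single {R : Type*} [CommRing R] (k : ℤ) (x : R) :
    sigmaInv (HahnSeries.single k x)
      = HahnSeries.single k ((((-1 : ℤˣ) ^ k : ℤˣ) : ℤ) • x) := by
  ext j
  change (((-1 : ℤˣ) ^ j : ℤˣ) : ℤ) • (HahnSeries.single k x).coeff j = _
  by_cases h : j = k <;> simp [h]

/-- Let `M` be an `A((z))`-module with covariant derivatives
`∇_v` (`v ∈ D`) and `∇_{z∂z}`, a higher-residue pairing `K` compatible with them,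
`ζ ∈ M`, `η` an `A`-bilinear form on `D = Derivation ℂ A A`, satisfying the purity
`K(∇_vζ, ∇_wζ) = η(v,w)·zⁿ⁻²` and the flat-structure expansion
`∇_{v₁}∇_{v₂}ζ = z⁻¹∇_{v₁*v₂}ζ + ∇_{∇̸_{v₁}v₂}ζ`.  Then (i) `η` is `∇̸`-horizontal;
(ii) `*` is self-adjoint for `η`; (iii) if moreover
`∇_{z∂z}∇_vζ = −z⁻¹∇_{E*v}ζ + ∇_{N(v)}ζ`, then `η(N v₁, v₂) + η(v₁, N v₂) = (n−2)·η(v₁,v₂)`. -/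
theorem metric_flat_structure
    (M : Type*) [AddCommGroup M] [Module (LaurentSeries A) M] (n : ℤ)
    -- the connection `∇̸` on `D`
    (nablaS : Derivation ℂ A A → Derivation ℂ A A → Derivation ℂ A A)
    (hnablaS_addl : ∀ v v' w, nablaS (v + v') w = nablaS v w + nablaS v' w)
    (hnablaS_smull : ∀ (a : A) (v w), nablaS (a • v) w = a • nablaS v w)
    (hnablaS_addr : ∀ v w w', nablaS v (w + w') = nablaS v w + nablaS v w')
    (hnablaS_leib : ∀ (v) (a : A) (w), nablaS v (a • w) = v a • w + a • nablaS v w)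
    -- the `A`-bilinear multiplication `*` on `D`
    (mul : Derivation ℂ A A → Derivation ℂ A A → Derivation ℂ A A)
    (hmul_addl : ∀ u v w, mul (u + v) w = mul u w + mul v w)
    (hmul_smull : ∀ (a : A) (u w), mul (a • u) w = a • mul u w)
    (hmul_addr : ∀ u v w, mul u (v + w) = mul u v + mul u w)
    (hmul_smulr : ∀ (a : A) (u w), mul u (a • w) = a • mul u w)
    -- the covariant derivatives on `M`
    (nablaV : Derivation ℂ A A → M → M)
    (hnablaV_add : ∀ v m m', nablaV v (m + m') = nablaV v m + nablaV v m')
    (hnablaV_leib : ∀ v (P : LaurentSeries A) (m : M),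
      nablaV v (P • m) = derivAct v P • m + P • nablaV v m)
    (nablaZ : M → M)
    (hnablaZ_add : ∀ m m', nablaZ (m + m') = nablaZ m + nablaZ m')
    (hnablaZ_leib : ∀ (P : LaurentSeries A) (m : M),
      nablaZ (P • m) = zDz P • m + P • nablaZ m)
    -- the higher residue pairing `K`
    (K : M → M → LaurentSeries A)
    (hK_addl : ∀ m m' w, K (m + m') w = K m w + K m' w)
    (hK_addr : ∀ w m m', K w (m + m') = K w m + K w m')
    (hK_Pl : ∀ (P : LaurentSeries A) (m w : M), K (P • m) w = P * K m w)
    (hK_Pr : ∀ (P : LaurentSeries A) (m w : M), K w (P • m) = sigmaInv P * K w m)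
    (hK_v : ∀ (v : Derivation ℂ A A) (m m' : M),
      derivAct v (K m m') = K (nablaV v m) m' + K m (nablaV v m'))
    (hK_z : ∀ m m' : M,
      zDz (K m m') = K (nablaZ m) m' + K m (nablaZ m'))
    -- the distinguished element and the metric
    (zeta : M) (eta : Derivation ℂ A A → Derivation ℂ A A → A)
    (heta_addl : ∀ u u' w, eta (u + u') w = eta u w + eta u' w)
    (heta_smull : ∀ (a : A) (u w), eta (a • u) w = a * eta u w)
    (heta_addr : ∀ w u u', eta w (u + u') = eta w u + eta w u')
    (heta_smulr : ∀ (a : A) (u w), eta w (a • u) = a * eta w u)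
    -- purity of the pairing on first covariant derivatives of `ζ`
    (hpure : ∀ v w : Derivation ℂ A A,
      K (nablaV v zeta) (nablaV w zeta) = HahnSeries.single (n - 2) (eta v w))
    -- the flat-structure expansion
    (hflat : ∀ v₁ v₂ : Derivation ℂ A A,
      nablaV v₁ (nablaV v₂ zeta)
        = (HahnSeries.single (-1 : ℤ) (1 : A) : LaurentSeries A) • nablaV (mul v₁ v₂) zeta
          + nablaV (nablaS v₁ v₂) zeta) :
    -- (i) horizontality of η
    (∀ v v₁ v₂ : Derivation ℂ A A,
      v (eta v₁ v₂) = eta (nablaS v v₁) v₂ + eta v₁ (nablaS v v₂)) ∧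
    -- (ii) self-adjointness of the multiplication
    (∀ v v₁ v₂ : Derivation ℂ A A,
      eta (mul v v₁) v₂ = eta v₁ (mul v v₂)) ∧
    -- (iii) duality of the exponents
    (∀ (E : Derivation ℂ A A) (N : Derivation ℂ A A → Derivation ℂ A A),
      (∀ v : Derivation ℂ A A,
        nablaZ (nablaV v zeta)
          = -((HahnSeries.single (-1 : ℤ) (1 : A) : LaurentSeries A)
                • nablaV (mul E v) zeta)
            + nablaV (N v) zeta) →
      ∀ v₁ v₂ : Derivation ℂ A A,
        eta (N v₁) v₂ + eta v₁ (N v₂) = (n - 2) • eta v₁ v₂) := by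
  let Kₐ : M →+ M →+ LaurentSeries A := .mk' (fun m ↦ .mk' (K m) (hK_addr m)) fun m m' ↦
    AddMonoidHom.ext (hK_addl m m')
  have sigmaInv_zInv :
      sigmaInv (HahnSeries.single (-1 : ℤ) (1 : A)) = -HahnSeries.single (-1) 1 := by
    simp [sigmaInv_single]
  have hKₐ : IsZSesquilinear Kₐ :=
    ⟨hK_Pl _, fun m m' ↦ (hK_Pr _ m' m).trans (by rw [sigmaInv_zInv, neg_mul]; rfl)⟩
  have general := metric_flat_structure_general hKₐ hpure (fun v ↦ derivAct_single v (n - 2)) hK_v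
    hflat (zDz_single (n - 2)) hK_z
  exact ⟨general.1, general.2.1, fun E ↦ general.2.2 (mul E)⟩

end
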